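/- For every real t with |t| < 1, the generating function of C_n := Re{(2/3)^{n−1} Li_n(i/√8) − 2^n Li_n(−i/√2)} admits the hypergeometric evaluation t·∑_{k=1}^∞ (−1)^k [ 2^{−3k}/(k − t/3) − 2^{1−k}/(k − t) ] = 1 − ∑_{m=0}^∞ [ (−t/2)_m · (1/2 − t/6)_m ] / [ (1 − t/2)_m · (1 − 2t/3)_m ], i.e. 2∑_{n≥1} C_n t^n = 1 − ₃F₂(−t/2, 1/2 − t/6, 1; 1 − t/2, 1 − 2t/3; 1). (Both series converge absolutely for |t| < 1.) -/

import Mathlib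

/-!
Put `t = -6x`, so that `a = -t/2 = 3x`, `b = 1/2 - t/6 = 1/2 + x` and `c = 1 - 2t/3 = 1 + 4x`.
Since `(a)_m / (a+1)_m = a / (a + m)`, the right-hand side is `-a ∑_{m ≥ 1} F(x, m)` with
`F(x, m) = (b)_m / ((c)_m (m + 3x))`, and the claim becomes that
`∑_{k ≥ 1} (-1)^k [8^{-k} / (k + 2x) - 2^{1-k} / (k + 6x)] = (1/2) ∑_{m ≥ 1} F(x, m)`
for `x > -1/6`.

Both sides satisfy the same first-order recurrence `g(x) = g(x+1) / 64 + (rational function)`.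
On the left, `x ↦ x + 1` shifts `k` by two in the first series and by six in the second, and
`(-8)^{-2} = (-2)^{-6} = 1/64` (`lerch_shift`). On the right, `F(x, m) - F(x+1, m) / 64` has a
Gosper antidifference `-R(m) (b)_m / (c)_m` with `R` rational (`cert_identity`,
`hypTerm_telescope`), and the boundary term at infinity vanishes because `(b)_m / (c)_m → 0`
(`pochRatio_tendsto_zero`). The inhomogeneous terms agree, so the defect `D` between the two sides
satisfies `D(x) = D(x+1) / 64` (`defect_shift`). As `D` is bounded on `[0, ∞)`
(`defect_bounded`), iterating gives `D(x) = D(x+n) / 64^n → 0`, hence `D = 0`.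
-/

/-- The rising factorial (Pochhammer symbol) `(a)_m = a(a+1)⋯(a+m−1)`. -/
noncomputable def poch (a : ℝ) (m : ℕ) : ℝ := ∏ j ∈ Finset.range m, (a + j)

open Filter Topology Finset

/-! ### The series `∑ r^k / (k + s)` -/

/-- The power series `∑_{k ≥ 1} r^k / (k + s)`, a Lerch transcendent. -/
noncomputable def lerch (r s : ℝ) : ℝ := ∑' k : ℕ, r ^ (k + 1) / ((k : ℝ) + 1 + s)

lemma lerch_term_le {r s : ℝ} (hs : -1 < s) (k : ℕ) :
    ‖r ^ (k + 1) / ((k : ℝ) + 1 + s)‖ ≤ |r| ^ (k + 1) * (1 / (1 + s)) := by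
  have hk : (0 : ℝ) ≤ k := k.cast_nonneg
  rw [norm_div, norm_pow, Real.norm_eq_abs, Real.norm_eq_abs,
    abs_of_pos (by linarith : (0 : ℝ) < (k : ℝ) + 1 + s), div_eq_mul_one_div]
  have h1 : (0 : ℝ) < 1 + s := by linarith
  gcongr
  linarith

lemma summable_abs_pow {r : ℝ} (hr : |r| < 1) : Summable fun k : ℕ => |r| ^ (k + 1) :=
  (summable_nat_add_iff 1).2 (summable_geometric_of_lt_one (abs_nonneg r) hr)

lemma lerch_summable {r s : ℝ} (hr : |r| < 1) (hs : -1 < s) :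
    Summable fun k : ℕ => r ^ (k + 1) / ((k : ℝ) + 1 + s) :=
  Summable.of_norm_bounded ((summable_abs_pow hr).mul_right _) (lerch_term_le hs)

lemma lerch_shift {r s : ℝ} (hr : |r| < 1) (hs : -1 < s) (n : ℕ) :
    lerch r s = ∑ i ∈ range n, r ^ (i + 1) / ((i : ℝ) + 1 + s) + r ^ n * lerch r (s + n) := by
  rw [lerch, ← (lerch_summable hr hs).sum_add_tsum_nat_add n, lerch, ← tsum_mul_left]
  congr 2
  ext k
  push_cast
  rw [show (k : ℝ) + n + 1 + s = k + 1 + (s + n) by ring]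
  ring

lemma lerch_bound {r s : ℝ} (hr : |r| < 1) (hs : 0 ≤ s) :
    |lerch r s| ≤ ∑' k : ℕ, |r| ^ (k + 1) := by
  rw [lerch, ← Real.norm_eq_abs]
  refine tsum_of_norm_bounded (summable_abs_pow hr).hasSum fun k => ?_
  refine (lerch_term_le (by linarith) k).trans ?_
  refine mul_le_of_le_one_right (by positivity) ?_
  rw [div_le_one (by linarith)]
  linarith

/-! ### Pochhammer symbols and the ratio `(b)_m / (c)_m` -/

lemma poch_zero (a : ℝ) : poch a 0 = 1 := by simp [poch]

lemma poch_succ (a : ℝ) (m : ℕ) : poch a (m + 1) = poch a m * (a + m) := by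
  simp [poch, prod_range_succ]

lemma poch_succ' (a : ℝ) (m : ℕ) : poch a (m + 1) = a * poch (a + 1) m := by
  simp only [poch, prod_range_succ']
  push_cast
  rw [mul_comm, add_zero]
  congr 1
  exact prod_congr rfl fun i _ => by ring

lemma poch_pos {a : ℝ} (ha : 0 < a) (m : ℕ) : 0 < poch a m :=
  prod_pos fun _ _ => by positivity

lemma poch_add_one {a : ℝ} (ha : a ≠ 0) (m : ℕ) : poch (a + 1) m = poch a m * (a + m) / a := by
  rw [eq_div_iff ha, ← poch_succ, poch_succ', mul_comm]

/-- The ratio `(b)_m / (c)_m` of the parameters `b = 1/2 - t/6`, `c = 1 - 2t/3`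
at `t = -6x`. -/
noncomputable def pochRatio (x : ℝ) (m : ℕ) : ℝ := poch (1 / 2 + x) m / poch (1 + 4 * x) m

lemma pochRatio_zero (x : ℝ) : pochRatio x 0 = 1 := by simp [pochRatio, poch_zero]

lemma pochRatio_succ (x : ℝ) (m : ℕ) :
    pochRatio x (m + 1) = pochRatio x m * ((1 / 2 + x + m) / (1 + 4 * x + m)) := by
  simp only [pochRatio, poch_succ, mul_div_mul_comm]

lemma pochRatio_pos {x : ℝ} (hx : -1 / 6 < x) (m : ℕ) : 0 < pochRatio x m :=
  div_pos (poch_pos (by linarith) m) (poch_pos (by linarith) m)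

/-- Replacing `x` by `x + 1` shifts `b` by one and `c` by four. -/
lemma pochRatio_add_one {x : ℝ} (hx : -1 / 6 < x) (m : ℕ) :
    pochRatio (x + 1) m = pochRatio x m * ((1 / 2 + x + m) / (1 / 2 + x))
      * ((1 + 4 * x) * (2 + 4 * x) * (3 + 4 * x) * (4 + 4 * x)
        / ((1 + 4 * x + m) * (2 + 4 * x + m) * (3 + 4 * x + m) * (4 + 4 * x + m))) := by
  have hm : (0 : ℝ) ≤ m := m.cast_nonneg
  have hc := poch_pos (show 0 < 1 + 4 * x by linarith) m
  have e1 : (1 : ℝ) + 4 * (x + 1) = 1 + 4 * x + 1 + 1 + 1 + 1 := by ring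
  have e2 : (1 : ℝ) / 2 + (x + 1) = 1 / 2 + x + 1 := by ring
  rw [pochRatio, pochRatio, e1, e2, poch_add_one (by linarith : (1 : ℝ) / 2 + x ≠ 0),
    poch_add_one (by linarith : 1 + 4 * x + 1 + 1 + 1 ≠ 0),
    poch_add_one (by linarith : 1 + 4 * x + 1 + 1 ≠ 0),
    poch_add_one (by linarith : 1 + 4 * x + 1 ≠ 0), poch_add_one (by linarith : 1 + 4 * x ≠ 0)]
  have h1 : (1 : ℝ) / 2 + x ≠ 0 := by linarith
  have h2 : 1 + 4 * x ≠ 0 := by linarith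
  have h3 : 2 + 4 * x ≠ 0 := by linarith
  have h4 : 3 + 4 * x ≠ 0 := by linarith
  have h5 : 4 + 4 * x ≠ 0 := by linarith
  have h6 : 1 + 4 * x + m ≠ 0 := by linarith
  have h7 : 2 + 4 * x + m ≠ 0 := by linarith
  have h8 : 3 + 4 * x + m ≠ 0 := by linarith
  have h9 : 4 + 4 * x + m ≠ 0 := by linarith
  rw [show 1 + 4 * x + 1 + 1 + 1 = 4 + 4 * x by ring, show 1 + 4 * x + 1 + 1 = 3 + 4 * x by ring,
    show 1 + 4 * x + 1 = 2 + 4 * x by ring]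
  generalize 1 / 2 + x = b at *
  generalize 1 + 4 * x = c1 at *
  generalize 2 + 4 * x = c2 at *
  generalize 3 + 4 * x = c3 at *
  generalize 4 + 4 * x = c4 at *
  field_simp

/-- Since `c - b > 0`, the terms `(c - b) (b)_m / ((c)_m (c + m))` are the successive differences
of `(b)_m / (c)_m`, so their partial sums are at most `1`. -/
lemma sum_pochRatio_div {x : ℝ} (hx : -1 / 6 < x) (n : ℕ) :
    ∑ m ∈ range n, pochRatio x m / (1 + 4 * x + m) = (1 - pochRatio x n) / (1 / 2 + 3 * x) := by
  have hd : 1 / 2 + 3 * x ≠ 0 := by linarith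
  induction n with
  | zero => simp [pochRatio_zero]
  | succ n ih =>
    have hn : (0 : ℝ) ≤ n := n.cast_nonneg
    have hc : 1 + 4 * x + n ≠ 0 := by linarith
    rw [sum_range_succ, ih, pochRatio_succ, div_add_div _ _ hd hc, div_eq_div_iff (by positivity) hd]
    field_simp
    ring

lemma pochRatio_div_nonneg {x : ℝ} (hx : -1 / 6 < x) (m : ℕ) :
    0 ≤ pochRatio x m / (1 + 4 * x + m) := by
  have hm : (0 : ℝ) ≤ m := m.cast_nonneg
  exact div_nonneg (pochRatio_pos hx m).le (by linarith)

lemma sum_pochRatio_div_le {x : ℝ} (hx : -1 / 6 < x) (n : ℕ) :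
    ∑ m ∈ range n, pochRatio x m / (1 + 4 * x + m) ≤ 1 / (1 / 2 + 3 * x) := by
  rw [sum_pochRatio_div hx]
  have := pochRatio_pos hx n
  have hd : 0 < 1 / 2 + 3 * x := by linarith
  gcongr
  linarith

lemma pochRatio_div_summable {x : ℝ} (hx : -1 / 6 < x) :
    Summable fun m : ℕ => pochRatio x m / (1 + 4 * x + m) :=
  summable_of_sum_range_le (pochRatio_div_nonneg hx) (sum_pochRatio_div_le hx)

lemma pochRatio_antitone {x : ℝ} (hx : -1 / 6 < x) : Antitone (pochRatio x) := by
  refine antitone_nat_of_succ_le fun m => ?_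
  have hm : (0 : ℝ) ≤ m := m.cast_nonneg
  rw [pochRatio_succ]
  refine mul_le_of_le_one_right (pochRatio_pos hx m).le ?_
  rw [div_le_one (by linarith)]
  linarith

/-- A positive limit would make the harmonic series converge, by comparison with
`∑ (b)_m / ((c)_m (c + m))`. -/
lemma pochRatio_tendsto_zero {x : ℝ} (hx : -1 / 6 < x) :
    Tendsto (pochRatio x) atTop (𝓝 0) := by
  have hbdd : BddBelow (Set.range (pochRatio x)) :=
    ⟨0, by rintro _ ⟨m, rfl⟩; exact (pochRatio_pos hx m).le⟩
  have hlim := tendsto_atTop_ciInf (pochRatio_antitone hx) hbdd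
  set L := ⨅ m, pochRatio x m
  have hL : 0 ≤ L := ge_of_tendsto' hlim fun m => (pochRatio_pos hx m).le
  rcases hL.eq_or_lt with h | h
  · rwa [← h] at hlim
  exfalso
  have hs : Summable fun m : ℕ => L / (2 + 4 * x) * (1 / ((m : ℝ) + 1)) := by
    refine Summable.of_nonneg_of_le (fun m => ?_) (fun m => ?_) (pochRatio_div_summable hx)
    · have : 0 < 2 + 4 * x := by linarith
      positivity
    · have hm : (0 : ℝ) ≤ m := m.cast_nonneg
      rw [div_mul_div_comm, mul_one]
      have h1 : 0 < 1 + 4 * x + m := by linarith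
      have h2 : L ≤ pochRatio x m := ciInf_le hbdd m
      refine div_le_div₀ (pochRatio_pos hx m).le h2 h1 ?_
      nlinarith [mul_nonneg hm (by linarith : 0 ≤ 1 + 4 * x)]
  have hne : L / (2 + 4 * x) ≠ 0 := (div_pos h (by linarith)).ne'
  rw [summable_mul_left_iff hne] at hs
  refine Real.not_summable_one_div_natCast ((summable_nat_add_iff 1).1 ?_)
  simpa using hs

/-! ### The hypergeometric series -/

/-- The `(m + 1)`-st term of the hypergeometric series, stripped of the factor
`a = -t / 2`. -/
noncomputable def hypTerm (x : ℝ) (m : ℕ) : ℝ := pochRatio x (m + 1) / ((m : ℝ) + 1 + 3 * x)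

lemma hypTerm_nonneg {x : ℝ} (hx : -1 / 6 < x) (m : ℕ) : 0 ≤ hypTerm x m := by
  have hm : (0 : ℝ) ≤ m := m.cast_nonneg
  exact div_nonneg (pochRatio_pos hx _).le (by linarith)

/-- Comparison with the telescoping series of `sum_pochRatio_div`; the constant `8/3` bounds
`(1 + 4x + m) / (m + 3x)` over `m ≥ 1` and `x > -1/6`. -/
lemma hypTerm_le {x : ℝ} (hx : -1 / 6 < x) (m : ℕ) :
    hypTerm x m ≤ 8 / 3 * (pochRatio x (m + 1) / (1 + 4 * x + ((m + 1 : ℕ) : ℝ))) := by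
  have hm : (0 : ℝ) ≤ m := m.cast_nonneg
  have hp := pochRatio_pos hx (m + 1)
  push_cast
  rw [hypTerm, ← mul_div_assoc, div_le_div_iff₀ (by linarith) (by linarith)]
  nlinarith

lemma sum_hypTerm_le {x : ℝ} (hx : -1 / 6 < x) (n : ℕ) :
    ∑ m ∈ range n, hypTerm x m ≤ 8 / 3 * (1 / (1 / 2 + 3 * x)) := by
  refine (sum_le_sum fun m _ => hypTerm_le hx m).trans ?_
  rw [← mul_sum]
  refine mul_le_mul_of_nonneg_left ?_ (by norm_num)
  refine le_trans ?_ (sum_pochRatio_div_le hx (n + 1))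
  rw [sum_range_succ']
  exact le_add_of_nonneg_right (pochRatio_div_nonneg hx 0)

lemma hypTerm_summable {x : ℝ} (hx : -1 / 6 < x) : Summable (hypTerm x) :=
  summable_of_sum_range_le (hypTerm_nonneg hx) (sum_hypTerm_le hx)

lemma tsum_hypTerm_bound {x : ℝ} (hx : 0 ≤ x) : |∑' m, hypTerm x m| ≤ 16 / 3 := by
  have hx' : -1 / 6 < x := by linarith
  rw [abs_of_nonneg (tsum_nonneg (hypTerm_nonneg hx'))]
  refine (Real.tsum_le_of_sum_range_le (hypTerm_nonneg hx') (sum_hypTerm_le hx')).trans ?_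
  rw [← mul_div_assoc, mul_one, div_le_iff₀ (by linarith)]
  linarith

/-! ### Gosper certificate for the shift `x ↦ x + 1` -/

/-- Numerator of the rational certificate `certRat`. -/
noncomputable def certNum (x m : ℝ) : ℝ :=
  (720 + 18123 * x + 172932 * x ^ 2 + 858387 * x ^ 3 + 2486262 * x ^ 4 + 4368276 * x ^ 5 + 4591944 * x ^ 6 + 2659392 * x ^ 7 + 653184 * x ^ 8)
    + (3393 + 69361 * x + 535446 * x ^ 2 + 2103590 * x ^ 3 + 4643928 * x ^ 4 + 5843448 * x ^ 5 + 3919104 * x ^ 6 + 1088640 * x ^ 7) * m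
    + (7063 + 110429 * x + 651994 * x ^ 2 + 1910484 * x ^ 3 + 2978712 * x ^ 4 + 2369088 * x ^ 5 + 756864 * x ^ 6) * m ^ 2
    + (7418 + 86626 * x + 375216 * x ^ 2 + 766600 * x ^ 3 + 747072 * x ^ 4 + 279936 * x ^ 5) * m ^ 3
    + (4088 + 34384 * x + 102152 * x ^ 2 + 128352 * x ^ 3 + 57888 * x ^ 4) * m ^ 4
    + (1120 + 6304 * x + 11232 * x ^ 2 + 6336 * x ^ 3) * m ^ 5
    + (120 + 384 * x + 288 * x ^ 2) * m ^ 6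

/-- The rational function `R(m)` for which `-R(m) (b)_m / (c)_m` is an antidifference in `m` of
`F(x, m) - F(x + 1, m) / 64`, where `F(x, m) = (b)_m / ((c)_m (m + 3x))`; it comes from Gosper's
algorithm. -/
noncomputable def certRat (x m : ℝ) : ℝ :=
  certNum x m / (12 * (2 * x + 1) * (6 * x + 1) * (6 * x + 5)
    * ((m + 3 * x) * (m + 3 * x + 1) * (m + 3 * x + 2))
    * ((1 + 4 * x + m) * (2 + 4 * x + m) * (3 + 4 * x + m)))

/-- The identity behind `hypTerm_telescope`, after division by `(b)_m / (c)_m`. -/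
lemma cert_identity {x m : ℝ} (hx : -1 / 6 < x) (hm : 1 ≤ m) :
    1 / (m + 3 * x) - (1 / 2 + x + m) / (1 / 2 + x)
      * ((1 + 4 * x) * (2 + 4 * x) * (3 + 4 * x) * (4 + 4 * x)
        / ((1 + 4 * x + m) * (2 + 4 * x + m) * (3 + 4 * x + m) * (4 + 4 * x + m)))
      / (m + 3 * (x + 1)) / 64 =
    certRat x m - (1 / 2 + x + m) / (1 + 4 * x + m) * certRat x (m + 1) := by
  have h1 : 1 + 2 * x ≠ 0 := by linarith
  have h2 : 1 + 6 * x ≠ 0 := by linarith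
  have h3 : 5 + 6 * x ≠ 0 := by linarith
  have k1 : m + 3 * x ≠ 0 := by linarith
  have k2 : m + 3 * x + 1 ≠ 0 := by linarith
  have k3 : m + 3 * x + 2 ≠ 0 := by linarith
  have k4 : m + 3 * x + 3 ≠ 0 := by linarith
  have l1 : 1 + 4 * x + m ≠ 0 := by linarith
  have l2 : 2 + 4 * x + m ≠ 0 := by linarith
  have l3 : 3 + 4 * x + m ≠ 0 := by linarith
  have l4 : 4 + 4 * x + m ≠ 0 := by linarith
  simp only [certRat]
  rw [show m + 3 * (x + 1) = m + 3 * x + 3 by ring,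
    show m + 1 + 3 * x + 2 = m + 3 * x + 3 by ring,
    show m + 1 + 3 * x + 1 = m + 3 * x + 2 by ring,
    show m + 1 + 3 * x = m + 3 * x + 1 by ring,
    show 1 + 4 * x + (m + 1) = 2 + 4 * x + m by ring,
    show 2 + 4 * x + (m + 1) = 3 + 4 * x + m by ring,
    show 3 + 4 * x + (m + 1) = 4 + 4 * x + m by ring,
    show 1 / 2 + x + m = (1 + 2 * x + 2 * m) / 2 by ring,
    show 1 / 2 + x = (1 + 2 * x) / 2 by ring,
    show 2 * x + 1 = 1 + 2 * x by ring, show 6 * x + 1 = 1 + 6 * x by ring,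
    show 6 * x + 5 = 5 + 6 * x by ring]
  -- With the linear factors as atoms, `field_simp` clears exactly these denominators.
  generalize d1 : 1 + 2 * x = a1 at *
  generalize d2 : 1 + 6 * x = a2 at *
  generalize d3 : 5 + 6 * x = a3 at *
  generalize d4 : m + 3 * x + 3 = a4 at *
  generalize d5 : m + 3 * x + 2 = a5 at *
  generalize d6 : m + 3 * x + 1 = a6 at *
  generalize d7 : m + 3 * x = a7 at *
  generalize d8 : 1 + 4 * x + m = a8 at *
  generalize d9 : 2 + 4 * x + m = a9 at *
  generalize d10 : 3 + 4 * x + m = a10 at *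
  generalize d11 : 4 + 4 * x + m = a11 at *
  field_simp
  subst d1 d2 d3 d4 d5 d6 d7 d8 d9 d10 d11
  simp only [certNum]
  ring

lemma hypTerm_telescope {x : ℝ} (hx : -1 / 6 < x) (m : ℕ) :
    hypTerm x m - hypTerm (x + 1) m / 64 =
      pochRatio x (m + 1) * certRat x ((m : ℝ) + 1)
        - pochRatio x (m + 1 + 1) * certRat x ((m : ℝ) + 1 + 1) := by
  have hm : (0 : ℝ) ≤ m := m.cast_nonneg
  have h := congrArg (pochRatio x (m + 1) * ·)
    (cert_identity hx (by linarith : (1 : ℝ) ≤ (m : ℝ) + 1))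
  rw [hypTerm, hypTerm, pochRatio_add_one hx, pochRatio_succ x (m + 1)]
  push_cast
  linear_combination h

lemma abs_sextic_le (c₀ c₁ c₂ c₃ c₄ c₅ c₆ : ℝ) {m : ℝ} (hm : 1 ≤ m) :
    |c₀ + c₁ * m + c₂ * m ^ 2 + c₃ * m ^ 3 + c₄ * m ^ 4 + c₅ * m ^ 5 + c₆ * m ^ 6| ≤
      (|c₀| + |c₁| + |c₂| + |c₃| + |c₄| + |c₅| + |c₆|) * m ^ 6 := by
  have hp : ∀ (c : ℝ) (i : ℕ), i ≤ 6 → |c * m ^ i| ≤ |c| * m ^ 6 := by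
    intro c i hi
    rw [abs_mul, abs_of_nonneg (by positivity : 0 ≤ m ^ i)]
    exact mul_le_mul_of_nonneg_left (pow_le_pow_right₀ hm hi) (abs_nonneg c)
  have h0 := hp c₀ 0 (by norm_num)
  have h1 := hp c₁ 1 (by norm_num)
  have h2 := hp c₂ 2 (by norm_num)
  have h3 := hp c₃ 3 (by norm_num)
  have h4 := hp c₄ 4 (by norm_num)
  have h5 := hp c₅ 5 (by norm_num)
  have h6 := hp c₆ 6 (by norm_num)
  rw [pow_zero, mul_one] at h0
  rw [pow_one] at h1
  rw [abs_le] at *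
  constructor <;> linarith [h0.1, h0.2, h1.1, h1.2, h2.1, h2.2, h3.1, h3.2, h4.1, h4.2,
    h5.1, h5.2, h6.1, h6.2]

/-- `R(m)` stays bounded as `m → ∞`: numerator and denominator both have degree `6` in `m`. -/
lemma certRat_bounded {x : ℝ} (hx : -1 / 6 < x) :
    ∃ C : ℝ, ∀ m : ℕ, |certRat x ((m : ℝ) + 1)| ≤ C := by
  obtain ⟨C, hC⟩ : ∃ C : ℝ, ∀ m : ℝ, 1 ≤ m → |certNum x m| ≤ C * m ^ 6 :=
    ⟨_, fun m hm => abs_sextic_le _ _ _ _ _ _ _ hm⟩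
  have hK : 0 < 12 * (2 * x + 1) * (6 * x + 1) * (6 * x + 5) := by
    have h1 : 0 < 2 * x + 1 := by linarith
    have h2 : 0 < 6 * x + 1 := by linarith
    have h3 : 0 < 6 * x + 5 := by linarith
    positivity
  set K := 12 * (2 * x + 1) * (6 * x + 1) * (6 * x + 5)
  -- Each factor `m + 3x + i` is at least `m / 2`, since `x > -1/6` and `m ≥ 1`.
  refine ⟨8 * C / K, fun n => ?_⟩
  have hn : (0 : ℝ) ≤ n := n.cast_nonneg
  obtain ⟨m, hm, hmn⟩ : ∃ m : ℝ, 1 ≤ m ∧ m = (n : ℝ) + 1 := ⟨_, by linarith, rfl⟩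
  rw [← hmn]
  have hm0 : 0 < m := by linarith
  have hden : m ^ 6 / 8 ≤ ((m + 3 * x) * (m + 3 * x + 1) * (m + 3 * x + 2))
      * ((1 + 4 * x + m) * (2 + 4 * x + m) * (3 + 4 * x + m)) := by
    rw [show m ^ 6 / 8 = (m / 2 * (m / 2) * (m / 2)) * (m * m * m) by ring]
    have a1 : m / 2 ≤ m + 3 * x := by linarith
    have a2 : m / 2 ≤ m + 3 * x + 1 := by linarith
    have a3 : m / 2 ≤ m + 3 * x + 2 := by linarith
    have a4 : m ≤ 1 + 4 * x + m := by linarith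
    have a5 : m ≤ 2 + 4 * x + m := by linarith
    have a6 : m ≤ 3 + 4 * x + m := by linarith
    have p1 : 0 ≤ m + 3 * x := by linarith
    have p2 : 0 ≤ m + 3 * x + 1 := by linarith
    have p4 : 0 ≤ 1 + 4 * x + m := by linarith
    have p5 : 0 ≤ 2 + 4 * x + m := by linarith
    have p3 : 0 ≤ m + 3 * x + 2 := by linarith
    gcongr
  rw [certRat, mul_assoc, abs_div]
  have hpos := lt_of_lt_of_le (by positivity : 0 < m ^ 6 / 8) hden
  rw [abs_of_pos (mul_pos hK hpos), div_le_div_iff₀ (mul_pos hK hpos) hK]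
  have hCm := hC m hm
  have hC0 : 0 ≤ C := nonneg_of_mul_nonneg_left ((abs_nonneg _).trans hCm) (by positivity)
  calc |certNum x m| * K ≤ C * m ^ 6 * K := by gcongr
    _ = 8 * C * (K * (m ^ 6 / 8)) := by ring
    _ ≤ _ := by gcongr

lemma tsum_hypTerm_sub {x : ℝ} (hx : -1 / 6 < x) :
    ∑' m, hypTerm x m - (∑' m, hypTerm (x + 1) m) / 64 =
      (1 / 2 + x) / (1 + 4 * x) * certRat x 1 := by
  have hs : Summable fun m => hypTerm x m - hypTerm (x + 1) m / 64 :=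
    (hypTerm_summable hx).sub ((hypTerm_summable (by linarith)).div_const 64)
  rw [← tsum_div_const, ← (hypTerm_summable hx).tsum_sub
    ((hypTerm_summable (by linarith)).div_const 64)]
  set G : ℕ → ℝ := fun m => pochRatio x (m + 1) * certRat x ((m : ℝ) + 1) with hG
  have hG0 : Tendsto G atTop (𝓝 0) := by
    obtain ⟨C, hC⟩ := certRat_bounded hx
    have hp := (tendsto_add_atTop_iff_nat 1).2 (pochRatio_tendsto_zero hx)
    refine squeeze_zero_norm (fun m => ?_) (by simpa using hp.mul_const C)
    rw [norm_mul, Real.norm_eq_abs, Real.norm_eq_abs, abs_of_pos (pochRatio_pos hx _)]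
    exact mul_le_mul_of_nonneg_left (hC m) (pochRatio_pos hx _).le
  have hsum : ∀ n, ∑ m ∈ range n, (hypTerm x m - hypTerm (x + 1) m / 64) = G 0 - G n := by
    intro n
    rw [← sum_range_sub']
    refine sum_congr rfl fun m _ => ?_
    rw [hypTerm_telescope hx, hG]
    push_cast
    rfl
  have h1 := hs.hasSum.tendsto_sum_nat
  have h2 : Tendsto (fun n => ∑ m ∈ range n, (hypTerm x m - hypTerm (x + 1) m / 64)) atTop
      (𝓝 (G 0 - 0)) := by
    simp only [hsum]
    exact hG0.const_sub _
  rw [tendsto_nhds_unique h1 h2, hG]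
  simp [pochRatio_succ, pochRatio_zero]

/-! ### Vanishing of the defect -/

/-- The difference of the two sides of the theorem, divided by `t = -6x`. -/
noncomputable def defect (x : ℝ) : ℝ :=
  lerch (-1 / 8) (2 * x) - 2 * lerch (-1 / 2) (6 * x) - (∑' m, hypTerm x m) / 2

lemma defect_shift {x : ℝ} (hx : -1 / 6 < x) : defect x = defect (x + 1) / 64 := by
  have hH := tsum_hypTerm_sub hx
  have hA := lerch_shift (r := -1 / 8) (s := 2 * x) (by norm_num [abs_lt]) (by linarith) 2
  have hB := lerch_shift (r := -1 / 2) (s := 6 * x) (by norm_num [abs_lt]) (by linarith) 6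
  have hR : (1 / 2 + x) / (1 + 4 * x) * certRat x 1 / 2 =
      ∑ i ∈ range 2, (-1 / 8 : ℝ) ^ (i + 1) / ((i : ℝ) + 1 + 2 * x)
        - 2 * ∑ i ∈ range 6, (-1 / 2 : ℝ) ^ (i + 1) / ((i : ℝ) + 1 + 6 * x) := by
    simp only [sum_range_succ, sum_range_zero, certRat, certNum]
    push_cast
    rw [show (0 : ℝ) + 1 + 2 * x = 1 + 2 * x by ring, show (1 : ℝ) + 1 + 2 * x = 2 * (1 + x) by ring,
      show (0 : ℝ) + 1 + 6 * x = 1 + 6 * x by ring,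
      show (1 : ℝ) + 1 + 6 * x = 2 * (1 + 3 * x) by ring,
      show (2 : ℝ) + 1 + 6 * x = 3 * (1 + 2 * x) by ring,
      show (3 : ℝ) + 1 + 6 * x = 2 * (2 + 3 * x) by ring,
      show (4 : ℝ) + 1 + 6 * x = 5 + 6 * x by ring,
      show (5 : ℝ) + 1 + 6 * x = 6 * (1 + x) by ring,
      show (1 : ℝ) / 2 + x = (1 + 2 * x) / 2 by ring,
      show 2 * x + 1 = 1 + 2 * x by ring, show 6 * x + 1 = 1 + 6 * x by ring,
      show 6 * x + 5 = 5 + 6 * x by ring,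
      show 1 + 3 * x + 1 = 2 + 3 * x by ring,
      show 1 + 3 * x + 2 = 3 * (1 + x) by ring,
      show 1 + 4 * x + 1 = 2 * (1 + 2 * x) by ring,
      show 2 + 4 * x + 1 = 3 + 4 * x by ring,
      show 3 + 4 * x + 1 = 4 * (1 + x) by ring]
    have h1 : 1 + 2 * x ≠ 0 := by linarith
    have h2 : 1 + 6 * x ≠ 0 := by linarith
    have h3 : 5 + 6 * x ≠ 0 := by linarith
    have h4 : 1 + x ≠ 0 := by linarith
    have h5 : 1 + 3 * x ≠ 0 := by linarith
    have h6 : 2 + 3 * x ≠ 0 := by linarith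
    have h7 : 1 + 4 * x ≠ 0 := by linarith
    have h8 : 3 + 4 * x ≠ 0 := by linarith
    generalize d1 : 1 + 2 * x = a1 at *
    generalize d2 : 1 + 6 * x = a2 at *
    generalize d3 : 5 + 6 * x = a3 at *
    generalize d4 : 1 + x = a4 at *
    generalize d5 : 1 + 3 * x = a5 at *
    generalize d6 : 2 + 3 * x = a6 at *
    generalize d7 : 1 + 4 * x = a7 at *
    generalize d8 : 3 + 4 * x = a8 at *
    clear hH hA hB
    field_simp
    subst d1 d2 d3 d4 d5 d6 d7 d8
    ring
  have e1 : 2 * (x + 1) = 2 * x + ((2 : ℕ) : ℝ) := by push_cast; ring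
  have e2 : 6 * (x + 1) = 6 * x + ((6 : ℕ) : ℝ) := by push_cast; ring
  rw [defect, defect, e1, e2]
  linear_combination hA - 2 * hB - hH / 2 - hR

lemma defect_bounded : ∃ M : ℝ, ∀ x, 0 ≤ x → |defect x| ≤ M := by
  refine ⟨∑' k : ℕ, |(-1 / 8 : ℝ)| ^ (k + 1) + 2 * ∑' k : ℕ, |(-1 / 2 : ℝ)| ^ (k + 1) + 16 / 3 / 2,
    fun x hx => ?_⟩
  have hA := abs_le.1 (lerch_bound (r := -1 / 8) (by norm_num [abs_lt])
    (by linarith : 0 ≤ 2 * x))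
  have hB := abs_le.1 (lerch_bound (r := -1 / 2) (by norm_num [abs_lt])
    (by linarith : 0 ≤ 6 * x))
  have hH := abs_le.1 (tsum_hypTerm_bound hx)
  rw [defect, abs_le]
  constructor <;> linarith [hA.1, hA.2, hB.1, hB.2, hH.1, hH.2]

lemma defect_iterate {x : ℝ} (hx : -1 / 6 < x) (n : ℕ) :
    defect x = defect (x + n) / 64 ^ n := by
  induction n with
  | zero => simp
  | succ n ih =>
    have hn : (0 : ℝ) ≤ n := n.cast_nonneg
    rw [ih, defect_shift (by linarith : -1 / 6 < x + n), pow_succ, div_div, mul_comm (64 : ℝ),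
      Nat.cast_succ, add_assoc]

lemma defect_eq_zero {x : ℝ} (hx : -1 / 6 < x) : defect x = 0 := by
  obtain ⟨M, hM⟩ := defect_bounded
  have h1 : ∀ n : ℕ, |defect x| ≤ M * (1 / 64) ^ (n + 1) := by
    intro n
    have hn : (0 : ℝ) ≤ n := n.cast_nonneg
    rw [defect_iterate hx (n + 1), abs_div, abs_of_pos (by positivity : (0 : ℝ) < 64 ^ (n + 1)),
      div_eq_mul_one_div, one_div_pow]
    refine mul_le_mul_of_nonneg_right (hM _ ?_) (by positivity)
    push_cast
    linarith
  have h2 : Tendsto (fun n : ℕ => M * (1 / 64 : ℝ) ^ (n + 1)) atTop (𝓝 0) := by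
    simpa using ((tendsto_add_atTop_iff_nat 1).2
      (tendsto_pow_atTop_nhds_zero_of_lt_one (r := (1 / 64 : ℝ)) (by norm_num)
        (by norm_num))).const_mul M
  exact abs_nonpos_iff.1 (ge_of_tendsto' h2 h1)

theorem C_generating_function_hypergeometric (t : ℝ) (ht : |t| < 1) :
    t * ∑' k : ℕ, (-1 : ℝ) ^ (k + 1) *
        ((1 / 2 ^ (3 * (k + 1))) / (((k + 1 : ℕ) : ℝ) - t / 3)
          - (2 / 2 ^ (k + 1)) / (((k + 1 : ℕ) : ℝ) - t)) =
      1 - ∑' m : ℕ,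
        (poch (-t / 2) m * poch (1 / 2 - t / 6) m) /
          (poch (1 - t / 2) m * poch (1 - 2 * t / 3) m) := by
  obtain ⟨x, rfl⟩ : ∃ x : ℝ, t = -6 * x := ⟨-t / 6, by ring⟩
  have hx : -1 / 6 < x := by linarith [(abs_lt.1 ht).2]
  have hL : ∑' k : ℕ, (-1 : ℝ) ^ (k + 1) *
        ((1 / 2 ^ (3 * (k + 1))) / (((k + 1 : ℕ) : ℝ) - -6 * x / 3)
          - (2 / 2 ^ (k + 1)) / (((k + 1 : ℕ) : ℝ) - -6 * x)) =
      lerch (-1 / 8) (2 * x) - 2 * lerch (-1 / 2) (6 * x) := by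
    have sA := lerch_summable (r := -1 / 8) (s := 2 * x) (by norm_num [abs_lt]) (by linarith)
    have sB := lerch_summable (r := -1 / 2) (s := 6 * x) (by norm_num [abs_lt]) (by linarith)
    rw [lerch, lerch, ← tsum_mul_left, ← sA.tsum_sub (sB.mul_left 2)]
    congr 1
    ext k
    rw [pow_mul, div_pow, div_pow]
    push_cast
    rw [show (k : ℝ) + 1 - -6 * x / 3 = k + 1 + 2 * x by ring,
      show (k : ℝ) + 1 - -6 * x = k + 1 + 6 * x by ring]
    norm_num
    ring
  -- `(a)_{m+1} / (a+1)_{m+1} = a / (a + 1 + m)` with `a = 3x`, which also covers `a = 0`.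
  have hterm : ∀ m : ℕ, (poch (-(-6 * x) / 2) (m + 1) * poch (1 / 2 - -6 * x / 6) (m + 1)) /
      (poch (1 - -6 * x / 2) (m + 1) * poch (1 - 2 * (-6 * x) / 3) (m + 1)) =
      3 * x * hypTerm x m := by
    intro m
    have hm : (0 : ℝ) ≤ m := m.cast_nonneg
    have hp := (poch_pos (by linarith : 0 < 3 * x + 1) m).ne'
    rw [show -(-6 * x) / 2 = 3 * x by ring, show 1 / 2 - -6 * x / 6 = 1 / 2 + x by ring,
      show 1 - -6 * x / 2 = 3 * x + 1 by ring, show 1 - 2 * (-6 * x) / 3 = 1 + 4 * x by ring,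
      mul_div_mul_comm, poch_succ' (3 * x), poch_succ (3 * x + 1), hypTerm, pochRatio,
      show (m : ℝ) + 1 + 3 * x = 3 * x + 1 + m by ring]
    have h1 : 3 * x + 1 + m ≠ 0 := by linarith
    field_simp
  have hs : Summable fun m : ℕ => (poch (-(-6 * x) / 2) m * poch (1 / 2 - -6 * x / 6) m) /
      (poch (1 - -6 * x / 2) m * poch (1 - 2 * (-6 * x) / 3) m) := by
    rw [← summable_nat_add_iff 1]
    simp only [hterm]
    exact (hypTerm_summable hx).mul_left _
  rw [hL, hs.tsum_eq_zero_add]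
  simp only [hterm, poch_zero, tsum_mul_left]
  have hD := defect_eq_zero hx
  rw [defect] at hD
  linear_combination -6 * x * hD
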